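/- Let q be a power of a prime p and let H be a subgroup of the symplectic similitude group GSp₄(q) that stabilizes a decomposition V = V₁ ⊥ V₂ of the natural module V = F_q⁴ into two nondegenerate 2-dimensional subspaces (that is, H permutes the set {V₁, V₂} and hence stabilizes the decomposition). Then there exist x, y, z ∈ Sp₄(q) such that H ∩ H^x ∩ H^y ∩ H^z is contained in the center Z(GSp₄(q)), i.e. consists of scalar matrices. -/

import Mathlib

open Matrix Pointwise

/-- `H^x = x⁻¹ H x`. -/
def conjBy {G : Type*} [Group G] (H : Subgroup G) (x : G) : Subgroup G :=
  Subgroup.map ((MulAut.conj x⁻¹).toMonoidHom) H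

/-- Hall π-subgroup of the whole group. -/
def IsHallSubgroup {G : Type*} [Group G] (π : Set ℕ) (H : Subgroup G) : Prop :=
  (∀ r : ℕ, r.Prime → r ∣ Nat.card H → r ∈ π) ∧ ∀ r ∈ π, ¬ r ∣ H.index

/-- Hall π-subgroup of the subgroup `K`. -/
def IsHallSubgroupIn {G : Type*} [Group G] (π : Set ℕ) (K H : Subgroup G) : Prop :=
  H ≤ K ∧ (∀ r : ℕ, r.Prime → r ∣ Nat.card H → r ∈ π) ∧ ∀ r ∈ π, ¬ r ∣ H.relIndex K

/-- The subgroup `SL_n` of `GL_n`. -/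
def SLsub (n : ℕ) (F : Type*) [Field F] : Subgroup (GL (Fin n) F) where
  carrier := {g | Matrix.det (g : Matrix (Fin n) (Fin n) F) = 1}
  one_mem' := by simp
  mul_mem' := by
    intro a b ha hb
    simp only [Set.mem_setOf_eq, Units.val_mul, Matrix.det_mul] at *
    rw [ha, hb, one_mul]
  inv_mem' := by
    intro g hg
    simp only [Set.mem_setOf_eq] at *
    have h1 : ((g⁻¹ : GL (Fin n) F) : Matrix (Fin n) (Fin n) F) *
        (g : Matrix (Fin n) (Fin n) F) = 1 := g.inv_mul
    have := congrArg Matrix.det h1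
    rw [Matrix.det_mul, Matrix.det_one, hg, mul_one] at this
    exact this

/-- The group of similitudes of the bilinear form `B` (acting on row vectors). -/
def similitudeGroup {n : ℕ} {F : Type*} [Field F]
    (B : (Fin n → F) → (Fin n → F) → F) : Subgroup (GL (Fin n) F) where
  carrier := {g | ∃ c : Fˣ, ∀ u v : Fin n → F,
    B (Matrix.vecMul u (g : Matrix (Fin n) (Fin n) F))
      (Matrix.vecMul v (g : Matrix (Fin n) (Fin n) F)) = (c : F) * B u v}
  one_mem' := ⟨1, by simp⟩
  mul_mem' := by
    rintro a b ⟨c, hc⟩ ⟨d, hd⟩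
    refine ⟨c * d, fun u v => ?_⟩
    simp only [Units.val_mul, ← Matrix.vecMul_vecMul, hd, hc]
    ring
  inv_mem' := by
    rintro g ⟨c, hc⟩
    refine ⟨c⁻¹, fun u v => ?_⟩
    have h1 : ∀ w : Fin n → F, Matrix.vecMul
        (Matrix.vecMul w ((g⁻¹ : GL (Fin n) F) : Matrix (Fin n) (Fin n) F))
        (g : Matrix (Fin n) (Fin n) F) = w := by
      intro w
      rw [Matrix.vecMul_vecMul, g.inv_mul, Matrix.vecMul_one]
    have h2 := hc (Matrix.vecMul u ((g⁻¹ : GL (Fin n) F) : Matrix (Fin n) (Fin n) F))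
      (Matrix.vecMul v ((g⁻¹ : GL (Fin n) F) : Matrix (Fin n) (Fin n) F))
    rw [h1, h1] at h2
    rw [h2, Units.val_inv_eq_inv_val, inv_mul_cancel_left₀ (by exact_mod_cast c.ne_zero)]

/-- The isometry group of the bilinear form `B` (acting on row vectors). -/
def isometryGroup {n : ℕ} {F : Type*} [Field F]
    (B : (Fin n → F) → (Fin n → F) → F) : Subgroup (GL (Fin n) F) where
  carrier := {g | ∀ u v : Fin n → F,
    B (Matrix.vecMul u (g : Matrix (Fin n) (Fin n) F))
      (Matrix.vecMul v (g : Matrix (Fin n) (Fin n) F)) = B u v}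
  one_mem' := by simp
  mul_mem' := by
    intro a b ha hb u v
    simp only [Set.mem_setOf_eq] at ha hb
    simp only [Units.val_mul, ← Matrix.vecMul_vecMul]
    rw [hb, ha]
  inv_mem' := by
    intro g hg u v
    have h1 : ∀ w : Fin n → F, Matrix.vecMul
        (Matrix.vecMul w ((g⁻¹ : GL (Fin n) F) : Matrix (Fin n) (Fin n) F))
        (g : Matrix (Fin n) (Fin n) F) = w := by
      intro w
      rw [Matrix.vecMul_vecMul, g.inv_mul, Matrix.vecMul_one]
    have h2 := hg (Matrix.vecMul u ((g⁻¹ : GL (Fin n) F) : Matrix (Fin n) (Fin n) F))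
      (Matrix.vecMul v ((g⁻¹ : GL (Fin n) F) : Matrix (Fin n) (Fin n) F))
    rw [h1, h1] at h2
    exact h2.symm

/-- The group of similitudes of the quadratic form `Q` (acting on row vectors). -/
def qSimilitudeGroup {n : ℕ} {F : Type*} [Field F]
    (Q : (Fin n → F) → F) : Subgroup (GL (Fin n) F) where
  carrier := {g | ∃ c : Fˣ, ∀ v : Fin n → F,
    Q (Matrix.vecMul v (g : Matrix (Fin n) (Fin n) F)) = (c : F) * Q v}
  one_mem' := ⟨1, by simp⟩
  mul_mem' := by
    rintro a b ⟨c, hc⟩ ⟨d, hd⟩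
    refine ⟨c * d, fun v => ?_⟩
    simp only [Units.val_mul, ← Matrix.vecMul_vecMul, hd, hc]
    ring
  inv_mem' := by
    rintro g ⟨c, hc⟩
    refine ⟨c⁻¹, fun v => ?_⟩
    have h1 : ∀ w : Fin n → F, Matrix.vecMul
        (Matrix.vecMul w ((g⁻¹ : GL (Fin n) F) : Matrix (Fin n) (Fin n) F))
        (g : Matrix (Fin n) (Fin n) F) = w := by
      intro w
      rw [Matrix.vecMul_vecMul, g.inv_mul, Matrix.vecMul_one]
    have h2 := hc (Matrix.vecMul v ((g⁻¹ : GL (Fin n) F) : Matrix (Fin n) (Fin n) F))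
    rw [h1] at h2
    rw [h2, Units.val_inv_eq_inv_val, inv_mul_cancel_left₀ (by exact_mod_cast c.ne_zero)]

/-- The unitary group `GU_n` with respect to the field automorphism `φ`. -/
def GUgrp (n : ℕ) {K : Type*} [Field K] (φ : K →+* K) : Subgroup (GL (Fin n) K) where
  carrier := {g | ((g : Matrix (Fin n) (Fin n) K).map φ)ᵀ * (g : Matrix (Fin n) (Fin n) K) = 1}
  one_mem' := by
    simp [Matrix.map_one φ φ.map_zero φ.map_one]
  mul_mem' := by
    intro a b ha hb
    simp only [Set.mem_setOf_eq, Units.val_mul, Matrix.map_mul, Matrix.transpose_mul] at *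
    calc ((b : Matrix (Fin n) (Fin n) K).map φ)ᵀ * ((a : Matrix (Fin n) (Fin n) K).map φ)ᵀ *
          ((a : Matrix (Fin n) (Fin n) K) * (b : Matrix (Fin n) (Fin n) K))
        = ((b : Matrix (Fin n) (Fin n) K).map φ)ᵀ *
          (((a : Matrix (Fin n) (Fin n) K).map φ)ᵀ * (a : Matrix (Fin n) (Fin n) K)) *
          (b : Matrix (Fin n) (Fin n) K) := by noncomm_ring
      _ = 1 := by rw [ha, mul_one, hb]
  inv_mem' := by
    intro g hg
    simp only [Set.mem_setOf_eq] at *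
    have hcomm : (g : Matrix (Fin n) (Fin n) K) * ((g : Matrix (Fin n) (Fin n) K).map φ)ᵀ = 1 :=
      mul_eq_one_comm.mp hg
    have h1 : ((g : Matrix (Fin n) (Fin n) K) * ((g⁻¹ : GL (Fin n) K) : Matrix (Fin n) (Fin n) K)).map φ = 1 := by
      rw [g.mul_inv]
      exact Matrix.map_one φ φ.map_zero φ.map_one
    rw [Matrix.map_mul] at h1
    have h2 := congrArg Matrix.transpose h1
    rw [Matrix.transpose_mul, Matrix.transpose_one] at h2
    calc (((g⁻¹ : GL (Fin n) K) : Matrix (Fin n) (Fin n) K).map φ)ᵀ *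
          ((g⁻¹ : GL (Fin n) K) : Matrix (Fin n) (Fin n) K)
        = (((g⁻¹ : GL (Fin n) K) : Matrix (Fin n) (Fin n) K).map φ)ᵀ *
          (((g : Matrix (Fin n) (Fin n) K).map φ)ᵀ * (g : Matrix (Fin n) (Fin n) K)) *
          ((g⁻¹ : GL (Fin n) K) : Matrix (Fin n) (Fin n) K) := by rw [hg, mul_one]
      _ = ((((g⁻¹ : GL (Fin n) K) : Matrix (Fin n) (Fin n) K).map φ)ᵀ *
          ((g : Matrix (Fin n) (Fin n) K).map φ)ᵀ) *
          ((g : Matrix (Fin n) (Fin n) K) * ((g⁻¹ : GL (Fin n) K) : Matrix (Fin n) (Fin n) K)) := by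
            noncomm_ring
      _ = 1 := by rw [h2, g.mul_inv, mul_one]


/-- Unipotent perturbation used to build the conjugating elements. -/
def zMat {F : Type*} [Field F] (s t w : F) : Matrix (Fin 4) (Fin 4) F :=
  !![0,0,s,t; 0,0,w,0; 0,t,0,0; w,-s,0,0]

/-- Block diagonal. -/
def bDiag {F : Type*} [Field F] (G : Matrix (Fin 4) (Fin 4) F) : Prop :=
  G 0 2 = 0 ∧ G 0 3 = 0 ∧ G 1 2 = 0 ∧ G 1 3 = 0 ∧ G 2 0 = 0 ∧ G 2 1 = 0 ∧ G 3 0 = 0 ∧ G 3 1 = 0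

/-- Block antidiagonal. -/
def bAnti {F : Type*} [Field F] (G : Matrix (Fin 4) (Fin 4) F) : Prop :=
  G 0 0 = 0 ∧ G 0 1 = 0 ∧ G 1 0 = 0 ∧ G 1 1 = 0 ∧ G 2 2 = 0 ∧ G 2 3 = 0 ∧ G 3 2 = 0 ∧ G 3 3 = 0

theorem zMat_sq {F : Type*} [Field F] (s t w : F) (h : t * w = 0) :
    zMat s t w * zMat s t w = 0 := by
  have h' : w * t = 0 := by rw [mul_comm]; exact h
  ext i j
  fin_cases i <;> fin_cases j <;> simp [zMat, Matrix.mul_apply, Fin.sum_univ_four, h, h'] <;> ring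

theorem zMat_inv {F : Type*} [Field F] (s t w : F) (h : t * w = 0) :
    (1 + zMat s t w) * (1 - zMat s t w) = 1 := by
  have := zMat_sq s t w h
  rw [mul_sub, add_mul, add_mul, this]; simp

/-- Standard symplectic form. -/
def om {F : Type*} [Field F] (u v : Fin 4 → F) : F :=
  u 0 * v 1 - u 1 * v 0 + u 2 * v 3 - u 3 * v 2

theorem zMat_om {F : Type*} [Field F] (s t w : F) (h : t * w = 0) (u v : Fin 4 → F) :
    om (u ᵥ* (1 + zMat s t w)) (v ᵥ* (1 + zMat s t w)) = om u v := by
  have hv : ∀ u : Fin 4 → F, u ᵥ* zMat s t w =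
      ![u 3 * w, u 2 * t - u 3 * s, u 0 * s + u 1 * w, u 0 * t] := by
    intro u
    ext j
    simp only [Matrix.vecMul, dotProduct, Fin.sum_univ_four]
    fin_cases j <;> simp [zMat] <;> ring
  simp only [Matrix.vecMul_add, Matrix.vecMul_one, hv]
  simp [om]
  linear_combination (u 1 * v 0 - u 0 * v 1 + u 3 * v 2 - u 2 * v 3) * h

theorem zMat_conj {F : Type*} [Field F] (s t w : F) (G : Matrix (Fin 4) (Fin 4) F) (i j : Fin 4) :
    ((1 + zMat s t w) * G * (1 - zMat s t w)) i j =
      G i j + (∑ k, zMat s t w i k * G k j) - (∑ k, (G i k + ∑ l, zMat s t w i l * G l k) * zMat s t w k j) := by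
  rw [Matrix.mul_sub, Matrix.mul_one, Matrix.sub_apply, Matrix.add_mul, Matrix.one_mul]
  simp only [Matrix.add_mul, Matrix.add_apply, Matrix.mul_apply, add_mul, Finset.sum_add_distrib]

theorem core {F : Type*} [Field F] (G G' : Matrix (Fin 4) (Fin 4) F) (hG : G * G' = 1)
    (h0 : bDiag G ∨ bAnti G)
    (h1 : bDiag ((1 + zMat 1 0 0) * G * (1 - zMat 1 0 0)) ∨
      bAnti ((1 + zMat 1 0 0) * G * (1 - zMat 1 0 0)))
    (h2 : bDiag ((1 + zMat 0 1 0) * G * (1 - zMat 0 1 0)) ∨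
      bAnti ((1 + zMat 0 1 0) * G * (1 - zMat 0 1 0)))
    (h3 : bDiag ((1 + zMat 0 0 1) * G * (1 - zMat 0 0 1)) ∨
      bAnti ((1 + zMat 0 0 1) * G * (1 - zMat 0 0 1))) :
    ∃ c : F, G = c • (1 : Matrix (Fin 4) (Fin 4) F) := by
  have e0 : G 0 0 * G' 0 0 + G 0 1 * G' 1 0 + G 0 2 * G' 2 0 + G 0 3 * G' 3 0 = 1 := by
    have := congrFun (congrFun hG 0) 0
    simpa [Matrix.mul_apply, Fin.sum_univ_four] using this
  have e1 : G 1 0 * G' 0 1 + G 1 1 * G' 1 1 + G 1 2 * G' 2 1 + G 1 3 * G' 3 1 = 1 := by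
    have := congrFun (congrFun hG 1) 1
    simpa [Matrix.mul_apply, Fin.sum_univ_four] using this
  simp only [bDiag, bAnti, zMat_conj] at h0 h1 h2 h3
  simp [zMat, Fin.sum_univ_four] at h1 h2 h3
  refine ⟨G 0 0, ?_⟩
  have key : G 0 1 = 0 ∧ G 1 0 = 0 ∧ G 2 3 = 0 ∧ G 3 2 = 0 ∧ G 1 1 = G 0 0 ∧ G 2 2 = G 0 0 ∧
      G 3 3 = G 0 0 ∧ bDiag G := by
    unfold bDiag
    rcases h0 with h0 | h0 <;> obtain ⟨a1,a2,a3,a4,a5,a6,a7,a8⟩ := h0 <;>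
      simp only [a1,a2,a3,a4,a5,a6,a7,a8] at * <;>
      rcases h1 with h1 | h1 <;> rcases h2 with h2 | h2 <;> rcases h3 with h3 | h3 <;> 
      grind
  obtain ⟨k1,k2,k3,k4,k5,k6,k7,a1,a2,a3,a4,a5,a6,a7,a8⟩ := key
  ext i j
  fin_cases i <;> fin_cases j <;> simp [*]

theorem exists_hyp {F : Type*} [Field F] (B : LinearMap.BilinForm F (Fin 4 → F))
    (V : Submodule F (Fin 4 → F)) (hd : Module.finrank F V = 2)
    (hn : ∀ u ∈ V, (∀ w ∈ V, B u w = 0) → u = 0) :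
    ∃ a ∈ V, ∃ b ∈ V, B a b = 1 := by
  have hne : V ≠ ⊥ := by
    rintro rfl
    simp at hd
  obtain ⟨a, ha, ha0⟩ := Submodule.exists_mem_ne_zero_of_ne_bot hne
  have : ∃ w ∈ V, B a w ≠ 0 := by
    by_contra hc
    push Not at hc
    exact ha0 (hn a ha hc)
  obtain ⟨w, hw, hb⟩ := this
  exact ⟨a, ha, (B a w)⁻¹ • w, V.smul_mem _ hw, by simp [hb]⟩

/-- Lemma `sp4`: a subgroup of `GSp₄(q)` stabilising an orthogonal decomposition
`V = V₁ ⊥ V₂` into nondegenerate 2-dimensional subspaces can be intersected with three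
of its `Sp₄(q)`-conjugates down to scalar matrices. -/
theorem stmt0 (p f q : ℕ) (hp : p.Prime) (hf : 1 ≤ f) (hq : q = p ^ f)
    (F : Type) [Field F] [Fintype F] (hcard : Fintype.card F = q)
    (B : LinearMap.BilinForm F (Fin 4 → F))
    (halt : ∀ v : Fin 4 → F, B v v = 0) (hnd : ∀ m : Fin 4 → F, (∀ n : Fin 4 → F, B m n = 0) → m = 0)
    (H : Subgroup (GL (Fin 4) F))
    (hHle : H ≤ similitudeGroup (fun u v => B u v))
    (V₁ V₂ : Submodule F (Fin 4 → F))
    (hdim1 : Module.finrank F V₁ = 2) (hdim2 : Module.finrank F V₂ = 2)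
    (hsup : V₁ ⊔ V₂ = ⊤) (hinf : V₁ ⊓ V₂ = ⊥)
    (horth : ∀ u ∈ V₁, ∀ v ∈ V₂, B u v = 0)
    (hnd1 : ∀ u ∈ V₁, (∀ w ∈ V₁, B u w = 0) → u = 0)
    (hnd2 : ∀ u ∈ V₂, (∀ w ∈ V₂, B u w = 0) → u = 0)
    (hstab : ∀ h : GL (Fin 4) F, h ∈ H →
      (V₁.map (Matrix.vecMulLinear (h : Matrix (Fin 4) (Fin 4) F)) = V₁ ∧
       V₂.map (Matrix.vecMulLinear (h : Matrix (Fin 4) (Fin 4) F)) = V₂) ∨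
      (V₁.map (Matrix.vecMulLinear (h : Matrix (Fin 4) (Fin 4) F)) = V₂ ∧
       V₂.map (Matrix.vecMulLinear (h : Matrix (Fin 4) (Fin 4) F)) = V₁)) :
    ∃ x y z : GL (Fin 4) F,
      x ∈ isometryGroup (fun u v => B u v) ∧
      y ∈ isometryGroup (fun u v => B u v) ∧
      z ∈ isometryGroup (fun u v => B u v) ∧
    ∀ g ∈ H ⊓ conjBy H x ⊓ conjBy H y ⊓ conjBy H z,
      ∃ c : F, (g : Matrix (Fin 4) (Fin 4) F) = c • (1 : Matrix (Fin 4) (Fin 4) F) := by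
  have hsk : ∀ u v, B u v = - B v u := by
    intro u v
    have h := halt (u + v)
    simp only [map_add, LinearMap.add_apply, halt, zero_add, add_zero] at h
    exact eq_neg_of_add_eq_zero_right h
  obtain ⟨a1, ha1, b1, hb1, h11⟩ := exists_hyp B V₁ hdim1 hnd1
  obtain ⟨a2, ha2, b2, hb2, h22⟩ := exists_hyp B V₂ hdim2 hnd2
  have h11' : B b1 a1 = -1 := by rw [hsk, h11]
  have h22' : B b2 a2 = -1 := by rw [hsk, h22]
  have horth' : ∀ u ∈ V₂, ∀ v ∈ V₁, B u v = 0 := by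
    intro u hu v hv
    rw [hsk, horth v hv u hu, neg_zero]
  let P : Matrix (Fin 4) (Fin 4) F := Matrix.of ![a1, b1, a2, b2]
  have hP0 : P 0 = a1 := rfl
  have hP1 : P 1 = b1 := rfl
  have hP2 : P 2 = a2 := rfl
  have hP3 : P 3 = b2 := rfl
  let N : Matrix (Fin 4) (Fin 4) F := Matrix.of fun k =>
    ![B (Pi.single k 1) b1, - B (Pi.single k 1) a1, B (Pi.single k 1) b2, - B (Pi.single k 1) a2]
  have hsum : ∀ w v : Fin 4 → F, ∑ k, w k * B (Pi.single k 1) v = B w v := by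
    intro w v
    conv_rhs => rw [pi_eq_sum_univ' w]
    simp only [map_sum, LinearMap.sum_apply, map_smul, LinearMap.smul_apply, smul_eq_mul]
  have hN : ∀ w : Fin 4 → F, w ᵥ* N = ![B w b1, - B w a1, B w b2, - B w a2] := by
    intro w
    ext j
    fin_cases j <;> simp [Matrix.vecMul, dotProduct, N, hsum]
  have hPN : P * N = 1 := by
    ext i j
    have : (P * N) i j = (P i ᵥ* N) j := rfl
    rw [this, hN]
    fin_cases i <;> fin_cases j <;>
      simp [hP0, hP1, hP2, hP3, h11, h22, h11', h22', halt, horth _ ha1 _ ha2, horth _ ha1 _ hb2,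
        horth _ hb1 _ ha2, horth _ hb1 _ hb2, horth' _ ha2 _ ha1, horth' _ ha2 _ hb1,
        horth' _ hb2 _ ha1, horth' _ hb2 _ hb1]
  have hNP : N * P = 1 := mul_eq_one_comm.mp hPN
  have hBP : ∀ u v : Fin 4 → F, B (u ᵥ* P) (v ᵥ* P) = om u v := by
    have hu : ∀ u : Fin 4 → F, u ᵥ* P = u 0 • a1 + u 1 • b1 + u 2 • a2 + u 3 • b2 := by
      intro u
      ext j
      simp [Matrix.vecMul, dotProduct, Fin.sum_univ_four, P]
    intro u v
    rw [hu, hu]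
    simp [h11, h22, h11', h22', halt, horth _ ha1 _ ha2, horth _ ha1 _ hb2,
        horth _ hb1 _ ha2, horth _ hb1 _ hb2, horth' _ ha2 _ ha1, horth' _ ha2 _ hb1,
        horth' _ hb2 _ ha1, horth' _ hb2 _ hb1, om]
    ring
  have hBN : ∀ u v : Fin 4 → F, om (u ᵥ* N) (v ᵥ* N) = B u v := by
    intro u v
    rw [← hBP, Matrix.vecMul_vecMul, Matrix.vecMul_vecMul, hNP, Matrix.vecMul_one, Matrix.vecMul_one]
  -- elements of H in the adapted basis
  have hH : ∀ h ∈ H, bDiag (P * (h : Matrix (Fin 4) (Fin 4) F) * N) ∨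
      bAnti (P * (h : Matrix (Fin 4) (Fin 4) F) * N) := by
    intro h hh
    have hrow : ∀ i j, (P * (h : Matrix (Fin 4) (Fin 4) F) * N) i j =
        (![B (P i ᵥ* (h : Matrix (Fin 4) (Fin 4) F)) b1, - B (P i ᵥ* (h : Matrix (Fin 4) (Fin 4) F)) a1,
          B (P i ᵥ* (h : Matrix (Fin 4) (Fin 4) F)) b2,
          - B (P i ᵥ* (h : Matrix (Fin 4) (Fin 4) F)) a2] : Fin 4 → F) j := by
      intro i j
      rw [← hN]
      rfl
    have hm : ∀ (V W : Submodule F (Fin 4 → F)),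
        V.map (Matrix.vecMulLinear (h : Matrix (Fin 4) (Fin 4) F)) = W →
        ∀ v ∈ V, v ᵥ* (h : Matrix (Fin 4) (Fin 4) F) ∈ W := by
      rintro V W rfl v hv
      exact ⟨v, hv, rfl⟩
    rcases hstab h hh with ⟨s1, s2⟩ | ⟨s1, s2⟩
    · left
      have A1 := hm _ _ s1 _ ha1
      have A2 := hm _ _ s1 _ hb1
      have A3 := hm _ _ s2 _ ha2
      have A4 := hm _ _ s2 _ hb2
      simp only [bDiag, hrow]
      simp [hP0, hP1, hP2, hP3, horth _ A1 _ ha2, horth _ A1 _ hb2, horth _ A2 _ ha2, horth _ A2 _ hb2,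
        horth' _ A3 _ ha1, horth' _ A3 _ hb1, horth' _ A4 _ ha1, horth' _ A4 _ hb1]
    · right
      have A1 := hm _ _ s1 _ ha1
      have A2 := hm _ _ s1 _ hb1
      have A3 := hm _ _ s2 _ ha2
      have A4 := hm _ _ s2 _ hb2
      simp only [bAnti, hrow]
      simp [hP0, hP1, hP2, hP3, horth' _ A1 _ ha1, horth' _ A1 _ hb1, horth' _ A2 _ ha1, horth' _ A2 _ hb1,
        horth _ A3 _ ha2, horth _ A3 _ hb2, horth _ A4 _ ha2, horth _ A4 _ hb2]
  have hX : ∀ s t w : F, t * w = 0 → ∃ x : GL (Fin 4) F,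
      x ∈ isometryGroup (fun u v => B u v) ∧ ∀ g ∈ conjBy H x,
        bDiag ((1 + zMat s t w) * (P * (g : Matrix (Fin 4) (Fin 4) F) * N) * (1 - zMat s t w)) ∨
        bAnti ((1 + zMat s t w) * (P * (g : Matrix (Fin 4) (Fin 4) F) * N) * (1 - zMat s t w)) := by
    intro s t w htw
    have hz := zMat_inv s t w htw
    have hx1 : (N * (1 + zMat s t w) * P) * (N * (1 - zMat s t w) * P) = 1 := by
      calc _ = N * (1 + zMat s t w) * (P * N) * (1 - zMat s t w) * P := by
            simp only [Matrix.mul_assoc]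
        _ = N * ((1 + zMat s t w) * (1 - zMat s t w)) * P := by
            rw [hPN]; simp only [Matrix.mul_assoc, Matrix.one_mul]
        _ = 1 := by rw [hz, Matrix.mul_one, hNP]
    refine ⟨⟨_, _, hx1, mul_eq_one_comm.mp hx1⟩, ?_, ?_⟩
    · intro u v
      change B (u ᵥ* (N * (1 + zMat s t w) * P)) (v ᵥ* (N * (1 + zMat s t w) * P)) = B u v
      simp only [← Matrix.vecMul_vecMul]
      rw [hBP, zMat_om s t w htw, hBN]
    · rintro g ⟨h, hh, rfl⟩
      have e : (1 + zMat s t w) * (P * ((N * (1 - zMat s t w) * P) *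
          (h : Matrix (Fin 4) (Fin 4) F) * (N * (1 + zMat s t w) * P)) * N) * (1 - zMat s t w) =
          P * (h : Matrix (Fin 4) (Fin 4) F) * N := by
        calc _ = (1 + zMat s t w) * (P * N) * (1 - zMat s t w) * (P *
          (h : Matrix (Fin 4) (Fin 4) F) * N) * (1 + zMat s t w) * (P * N) * (1 - zMat s t w) := by
              simp only [Matrix.mul_assoc]
          _ = ((1 + zMat s t w) * (1 - zMat s t w)) * (P *
          (h : Matrix (Fin 4) (Fin 4) F) * N) * ((1 + zMat s t w) * (1 - zMat s t w)) := by
              rw [hPN]; simp only [Matrix.mul_assoc, Matrix.one_mul]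
          _ = _ := by rw [hz, Matrix.one_mul, Matrix.mul_one]
      have := hH h hh
      rw [← e] at this
      simpa [MulAut.conj_apply] using this
  obtain ⟨x, hx, hx'⟩ := hX 1 0 0 (by simp)
  obtain ⟨y, hy, hy'⟩ := hX 0 1 0 (by simp)
  obtain ⟨z, hz, hz'⟩ := hX 0 0 1 (by simp)
  refine ⟨x, y, z, hx, hy, hz, ?_⟩
  rintro g ⟨⟨⟨g0, g1⟩, g2⟩, g3⟩
  have hinv : (P * (g : Matrix (Fin 4) (Fin 4) F) * N) *
      (P * ((g⁻¹ : GL (Fin 4) F) : Matrix (Fin 4) (Fin 4) F) * N) = 1 := by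
    calc _ = P * (g : Matrix (Fin 4) (Fin 4) F) * (N * P) *
        ((g⁻¹ : GL (Fin 4) F) : Matrix (Fin 4) (Fin 4) F) * N := by simp only [Matrix.mul_assoc]
      _ = P * ((g : Matrix (Fin 4) (Fin 4) F) *
        ((g⁻¹ : GL (Fin 4) F) : Matrix (Fin 4) (Fin 4) F)) * N := by
          rw [hNP]; simp only [Matrix.mul_assoc, Matrix.one_mul]
      _ = 1 := by rw [g.mul_inv, Matrix.mul_one, hPN]
  obtain ⟨c, hc⟩ := core _ _ hinv (hH g g0) (hx' g g1) (hy' g g2) (hz' g g3)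
  refine ⟨c, ?_⟩
  calc (g : Matrix (Fin 4) (Fin 4) F) = (N * P) * g * (N * P) := by simp [hNP]
    _ = N * (P * (g : Matrix (Fin 4) (Fin 4) F) * N) * P := by simp only [Matrix.mul_assoc]
    _ = c • (1 : Matrix (Fin 4) (Fin 4) F) := by
      rw [hc, Matrix.mul_smul, Matrix.mul_one, Matrix.smul_mul, hNP]
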